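/- arXiv:1806.03625 — 2 statements merged into one kernel-verified Lean document; each statement's English description precedes it below -/
import Mathlib

section
/- Let t ≥ 1 be an integer and let M be a t-cyclic matroid. Then r(M) = r*(M) = |E(M)|/2, where r and r* denote the rank of M and of its dual M*, respectively. -/
open Set

namespace CyclicArr

variable {α : Type*}

/-- `C` is a circuit of the matroid `M`: a minimal dependent set. -/
def Cct (M : Matroid α) (C : Set α) : Prop := Minimal M.Dep C

/-- The set of `len` consecutive elements `{e_i, e_{i+1}, …, e_{i+len-1}}`
in a cyclic ordering `e`, subscripts mod `n`. -/
def seg {n : ℕ} (e : ZMod n → α) (i : ℤ) (len : ℕ) : Set α :=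
  (fun k : ℕ => e ((i + k : ℤ) : ZMod n)) '' Set.Iio len

/-- `e` is a cyclic ordering of (the ground set of) `M`. -/
def CyclicOrd {n : ℕ} (M : Matroid α) (e : ZMod n → α) : Prop :=
  Function.Injective e ∧ Set.range e = M.E

/-- `e` is a cyclic `(t-1, t)`-ordering of `M`: every `t-1` consecutive elements
are contained in a `t`-element circuit and a `t`-element cocircuit. -/
def CyclicPropOrd {n : ℕ} (M : Matroid α) (t : ℕ) (e : ZMod n → α) : Prop :=
  CyclicOrd M e ∧
  ∀ i : ℤ, (∃ C, Cct M C ∧ C.ncard = t ∧ seg e i (t-1) ⊆ C) ∧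
           (∃ C, Cct M✶ C ∧ C.ncard = t ∧ seg e i (t-1) ⊆ C)

/-- `M` has the cyclic `(t-1, t)`-property: it admits a cyclic `(t-1, t)`-ordering. -/
def HasCycProp (M : Matroid α) (t : ℕ) : Prop :=
  ∃ (n : ℕ) (e : ZMod n → α), CyclicPropOrd M t e

/-- `e` is an odd `t`-cyclic ordering of `M` (with `n ≥ t+1`): for all odd `i ∈ {1,…,n}`,
`{e_i, …, e_{i+t-1}}` is a `t`-element circuit and `{e_{i+1}, …, e_{i+t}}` is a
`t`-element cocircuit. -/
def OddTCycOrd {n : ℕ} (M : Matroid α) (t : ℕ) (e : ZMod n → α) : Prop :=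
  CyclicOrd M e ∧ t + 1 ≤ n ∧
  ∀ i : ℕ, Odd i → 1 ≤ i → i ≤ n →
    (Cct M (seg e (i : ℤ) t) ∧ (seg e (i : ℤ) t).ncard = t) ∧
    (Cct M✶ (seg e ((i : ℤ) + 1) t) ∧ (seg e ((i : ℤ) + 1) t).ncard = t)

/-- `e` is an even `t`-cyclic ordering of `M` (with `n ≥ t+1`): for all odd `i ∈ {1,…,n}`,
`{e_i, …, e_{i+t-1}}` is both a `t`-element circuit and a `t`-element cocircuit. -/
def EvenTCycOrd {n : ℕ} (M : Matroid α) (t : ℕ) (e : ZMod n → α) : Prop :=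
  CyclicOrd M e ∧ t + 1 ≤ n ∧
  ∀ i : ℕ, Odd i → 1 ≤ i → i ≤ n →
    Cct M (seg e (i : ℤ) t) ∧ Cct M✶ (seg e (i : ℤ) t) ∧ (seg e (i : ℤ) t).ncard = t

/-- `M` is `t`-cyclic: it admits an odd or even `t`-cyclic ordering. -/
def TCyclic (M : Matroid α) (t : ℕ) : Prop :=
  ∃ (n : ℕ) (e : ZMod n → α), OddTCycOrd M t e ∨ EvenTCycOrd M t e

/-- The rank of a set `X` in a matroid `M`: the maximum cardinality of an
independent subset of `X` (for a finite matroid). -/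
noncomputable def rkf (M : Matroid α) (X : Set α) : ℕ :=
  sSup {k | ∃ I, M.Indep I ∧ I ⊆ X ∧ I.ncard = k}

/-- The connectivity function `λ(X) = r(X) + r*(X) - |X|`, valued in `ℤ`. -/
noncomputable def lam (M : Matroid α) (X : Set α) : ℤ :=
  (rkf M X : ℤ) + (rkf M✶ X : ℤ) - (X.ncard : ℤ)

/-- The local connectivity `⊓(X, Y) = r(X) + r(Y) - r(X ∪ Y)`, valued in `ℤ`. -/
noncomputable def pic (M : Matroid α) (X Y : Set α) : ℤ :=
  (rkf M X : ℤ) + (rkf M Y : ℤ) - (rkf M (X ∪ Y) : ℤ)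

/-- `X` is exactly `k`-separating: `λ(X) = k - 1`. -/
noncomputable def ExactSep (M : Matroid α) (k : ℕ) (X : Set α) : Prop :=
  lam M X = (k : ℤ) - 1

/-- `(P_1, …, P_m)` is a concatenation of the cyclic ordering `e`, where `P i` is the
block of `l i` consecutive elements starting at position `a i`, and the blocks occur in
cyclic order and partition the ground set. -/
def IsConcat {n m : ℕ} (e : ZMod n → α) (P : ZMod m → Set α) (a l : ZMod m → ℕ) : Prop :=
  (∀ i, 1 ≤ l i) ∧
  (∀ i, ((a (i + 1) : ZMod n)) = ((a i + l i : ℕ) : ZMod n)) ∧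
  (∀ i, P i = seg e (a i : ℤ) (l i)) ∧
  Set.univ.PairwiseDisjoint P ∧
  (⋃ i, P i) = Set.range e

/-- `(P_1, …, P_m)` is a `k`-flower of `M`: a partition of the ground set into nonempty
sets, each exactly `k`-separating, with consecutive unions exactly `k`-separating. -/
noncomputable def IsFlower (M : Matroid α) (k : ℕ) {m : ℕ} (P : ZMod m → Set α) : Prop :=
  2 ≤ m ∧
  Set.univ.PairwiseDisjoint P ∧ (⋃ i, P i) = M.E ∧
  (∀ i, (P i).Nonempty) ∧
  (∀ i, ExactSep M k (P i)) ∧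
  (3 ≤ m → ∀ i, ExactSep M k (P i ∪ P (i + 1)))

/-- `I ⊆ ZMod m` is a set of consecutive members in the cyclic order. -/
def CycInterval {m : ℕ} (I : Set (ZMod m)) : Prop :=
  ∃ (a : ZMod m) (len : ℕ), 0 < len ∧ I = (fun k : ℕ => a + (k : ZMod m)) '' Set.Iio len

/-- A `k`-daisy: a `k`-flower in which the union of a proper nonempty collection of
petals is exactly `k`-separating precisely when the petals are consecutive. -/
noncomputable def IsDaisy (M : Matroid α) (k : ℕ) {m : ℕ} (P : ZMod m → Set α) : Prop :=
  IsFlower M k P ∧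
  ∀ I : Set (ZMod m), I.Nonempty → I ≠ Set.univ →
    (ExactSep M k (⋃ i ∈ I, P i) ↔ CycInterval I)

/-- A `k`-anemone: a `k`-flower in which the union of every proper nonempty collection
of petals is exactly `k`-separating. -/
noncomputable def IsAnemone (M : Matroid α) (k : ℕ) {m : ℕ} (P : ZMod m → Set α) : Prop :=
  IsFlower M k P ∧
  ∀ I : Set (ZMod m), I.Nonempty → I ≠ Set.univ → ExactSep M k (⋃ i ∈ I, P i)

/-!
Let `r` and `r*` be the ranks of `M` and `M✶`, so that `r + r* = n`. A `t`-element circuit and a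
`t`-element cocircuit give `r, r* ≥ t - 1`, which forces `r = r* = t - 1` when `2t ≥ n + 2`.
Otherwise two blocks of length `t` overlapping in one position meet in exactly one element, so by
orthogonality they are not a circuit and a cocircuit; comparing starting positions shows that `n` is
even and that a cocircuit block starts right after a circuit block. In an arc of length `t + 2m`
whose blocks at even offsets are circuits, every second element after the first block is spanned by
its predecessors, so the arc has rank at most `t - 1 + m`. For `n = 2t + 2m` the complement of such
an arc is a cocircuit, whence `r ≤ t + m = n / 2`; dually `r* ≤ n / 2`.
-/

section Matroid

variable {M : Matroid α} {C K X : Set α} {x : α}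

lemma cast_rkf (M : Matroid α) [M.RankFinite] (X : Set α) : (rkf M X : ℕ∞) = M.eRk X := by
  obtain ⟨B, hB⟩ := M.exists_isBasis' X
  suffices hmax : IsGreatest {k | ∃ I, M.Indep I ∧ I ⊆ X ∧ I.ncard = k} B.ncard by
    rw [rkf, hmax.csSup_eq, hB.indep.finite.cast_ncard_eq, hB.encard_eq_eRk]
  refine ⟨⟨B, hB.indep, hB.subset, rfl⟩, ?_⟩
  rintro _ ⟨I, hI, hIX, rfl⟩
  rw [← Nat.cast_le (α := ℕ∞), hI.finite.cast_ncard_eq, hB.indep.finite.cast_ncard_eq,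
    hB.encard_eq_eRk]
  exact hI.encard_le_eRk_of_subset hIX

lemma rkf_ground_add_rkf_dual_ground (M : Matroid α) [M.Finite] :
    rkf M M.E + rkf M✶ M✶.E = M.E.ncard := by
  rw [← Nat.cast_inj (R := ℕ∞), Nat.cast_add, cast_rkf, cast_rkf, M.eRk_ground, M✶.eRk_ground,
    M.eRank_add_eRank_dual, M.ground_finite.cast_ncard_eq]

lemma ncard_le_rkf_ground_add_one_of_isCircuit [M.RankFinite] (hC : M.IsCircuit C) :
    C.ncard ≤ rkf M M.E + 1 := by
  refine (encard_le_coe_iff_finite_ncard_le.1 ?_).2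
  rw [← hC.eRk_add_one_eq, Nat.cast_add, cast_rkf, M.eRk_ground, Nat.cast_one]
  gcongr
  exact M.eRk_le_eRank C

lemma eRk_insert_of_mem_isCircuit (hC : M.IsCircuit C) (hx : x ∈ C) (hCX : C ⊆ insert x X) :
    M.eRk (insert x X) = M.eRk X := by
  have hspan : x ∈ M.closure X :=
    M.closure_subset_closure (sdiff_singleton_subset_iff.2 hCX)
      (hC.mem_closure_sdiff_singleton_of_mem hx)
  rw [← M.eRk_insert_closure_eq, insert_eq_of_mem hspan, M.eRk_closure_eq]

lemma eRank_le_eRk_compl_add_one_of_isCocircuit (hK : M.IsCocircuit K) :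
    M.eRank ≤ M.eRk (M.E \ K) + 1 := by
  obtain ⟨y, hy⟩ := hK.nonempty
  have hspan : M.Spanning (M.E \ (K \ {y})) :=
    Matroid.Coindep.compl_spanning (hK.isCircuit.sdiff_singleton_indep hy)
  have hsub : M.E \ (K \ {y}) ⊆ insert y (M.E \ K) := by
    rintro x ⟨hxE, hxK⟩
    by_cases hxy : x = y
    · exact .inl hxy
    · exact .inr ⟨hxE, fun hx => hxK ⟨hx, hxy⟩⟩
  calc M.eRank = M.eRk (M.E \ (K \ {y})) := hspan.eRk_eq.symm
    _ ≤ M.eRk (insert y (M.E \ K)) := M.eRk_mono hsub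
    _ ≤ M.eRk (M.E \ K) + 1 := M.eRk_insert_le_add_one _ _

end Matroid

section Segments

variable {n : ℕ} {e : ZMod n → α}

lemma seg_eq_image_Ico (e : ZMod n → α) (i : ℤ) (k : ℕ) :
    seg e i k = (fun j : ℤ => e j) '' Ico i (i + k) := by
  ext x
  constructor
  · rintro ⟨j, hj, rfl⟩
    rw [mem_Iio] at hj
    exact ⟨i + j, ⟨by omega, by omega⟩, rfl⟩
  · rintro ⟨j, ⟨hij, hjk⟩, rfl⟩
    refine ⟨(j - i).toNat, by rw [mem_Iio]; omega, ?_⟩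
    dsimp only
    rw [Int.toNat_of_nonneg (by omega), add_sub_cancel]

lemma apply_intCast_mem_seg {i j : ℤ} {k : ℕ} (hij : i ≤ j) (hjk : j < i + k) :
    e j ∈ seg e i k := by
  rw [seg_eq_image_Ico]
  exact mem_image_of_mem _ ⟨hij, hjk⟩

lemma seg_subset_seg {i j : ℤ} {k l : ℕ} (hij : i ≤ j) (hkl : j + l ≤ i + k) :
    seg e j l ⊆ seg e i k := by
  rw [seg_eq_image_Ico, seg_eq_image_Ico]
  exact image_mono (Ico_subset_Ico hij hkl)

lemma seg_add (e : ZMod n → α) (i : ℤ) (k l : ℕ) :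
    seg e i (k + l) = seg e i k ∪ seg e (i + k) l := by
  rw [seg_eq_image_Ico, seg_eq_image_Ico, seg_eq_image_Ico, ← image_union,
    Ico_union_Ico_eq_Ico (by omega) (by omega), Nat.cast_add, add_assoc]

lemma seg_succ (e : ZMod n → α) (i : ℤ) (k : ℕ) :
    seg e i (k + 1) = insert (e ((i + k : ℤ) : ZMod n)) (seg e i k) := by
  rw [seg, ← Order.succ_eq_add_one, Order.Iio_succ_eq_insert, image_insert_eq, seg]

lemma seg_congr {i j : ℤ} (hij : (i : ZMod n) = j) (k : ℕ) : seg e i k = seg e j k := by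
  simp only [seg, Int.cast_add, hij]

lemma seg_self_eq_range [NeZero n] (e : ZMod n → α) (i : ℤ) : seg e i n = range e := by
  refine Subset.antisymm (image_subset_iff.2 fun _ _ => mem_range_self _) ?_
  rintro _ ⟨z, rfl⟩
  exact ⟨(z - i).val, ZMod.val_lt _, by simp⟩

lemma encard_seg_le (e : ZMod n → α) (i : ℤ) (k : ℕ) : (seg e i k).encard ≤ k :=
  (encard_image_le _ _).trans_eq (by
    rw [← Finset.coe_Iio, encard_coe_eq_coe_finsetCard, Nat.card_Iio])

lemma injOn_intCast_Ico (he : Function.Injective e) (i : ℤ) :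
    InjOn (fun j : ℤ => e j) (Ico i (i + n)) := by
  rintro j ⟨hj, hj'⟩ k ⟨hk, hk'⟩ hjk
  have hdvd : (n : ℤ) ∣ k - j := (ZMod.intCast_eq_intCast_iff_dvd_sub j k n).1 (he hjk)
  have hzero : k - j = 0 := Int.eq_zero_of_abs_lt_dvd hdvd (abs_lt.2 ⟨by omega, by omega⟩)
  omega

lemma ncard_seg (he : Function.Injective e) (i : ℤ) {k : ℕ} (hk : k ≤ n) :
    (seg e i k).ncard = k := by
  have hsub : Ico i (i + k) ⊆ Ico i (i + n) := Ico_subset_Ico_right (by omega)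
  rw [seg_eq_image_Ico, ((injOn_intCast_Ico he i).mono hsub).ncard_image, ← Finset.coe_Ico,
    ncard_coe_finset, Int.card_Ico, add_sub_cancel_left, Int.toNat_natCast]

lemma seg_inter_seg_eq_singleton (he : Function.Injective e) {t : ℕ} (ht : 1 ≤ t)
    (htn : 2 * t ≤ n + 1) (i : ℤ) :
    seg e i t ∩ seg e (i + t - 1) t = {e ((i + t - 1 : ℤ) : ZMod n)} := by
  have hIco : Ico i (i + t) ∩ Ico (i + t - 1) (i + t - 1 + t) = {i + t - 1} := by
    ext j
    simp only [mem_inter_iff, mem_Ico, mem_singleton_iff]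
    omega
  rw [seg_eq_image_Ico, seg_eq_image_Ico, ← (injOn_intCast_Ico he i).image_inter
    (Ico_subset_Ico (by omega) (by omega)) (Ico_subset_Ico (by omega) (by omega)), hIco,
    image_singleton]

end Segments

section Arcs

variable {n : ℕ} {e : ZMod n → α} {M : Matroid α} {t : ℕ}

lemma eRk_seg_add_one_le (ht : 1 ≤ t) {a : ℤ} {m : ℕ}
    (hC : ∀ j ≤ m, M.IsCircuit (seg e (a + 2 * j) t)) :
    M.eRk (seg e a (t + 2 * m)) + 1 ≤ t + m := by
  induction m with
  | zero =>
    have hC₀ : M.IsCircuit (seg e a t) := by simpa using hC 0 le_rfl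
    simpa [hC₀.eRk_add_one_eq] using encard_seg_le e a t
  | succ m ih =>
    have hlast : M.eRk (seg e a (t + 2 * m + 1 + 1)) = M.eRk (seg e a (t + 2 * m + 1)) := by
      rw [seg_succ]
      refine eRk_insert_of_mem_isCircuit (hC (m + 1) le_rfl) (apply_intCast_mem_seg ?_ ?_) ?_
      · push_cast; omega
      · push_cast; omega
      · rw [← seg_succ]
        exact seg_subset_seg (by omega) (by push_cast; omega)
    calc M.eRk (seg e a (t + 2 * (m + 1))) + 1 = M.eRk (seg e a (t + 2 * m + 1)) + 1 := by
          rw [← hlast]; rfl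
      _ ≤ M.eRk (seg e a (t + 2 * m)) + 1 + 1 := by
          rw [seg_succ]
          gcongr
          exact M.eRk_insert_le_add_one _ _
      _ ≤ t + m + 1 := by
          gcongr ?_ + 1
          exact ih fun j hj => hC j (hj.trans m.le_succ)
      _ = t + (m + 1 : ℕ) := by rw [Nat.cast_succ, add_assoc]

lemma rkf_ground_le_of_isCocircuit_seg [M.RankFinite] (ht : 1 ≤ t) {a b : ℤ} {m : ℕ}
    (hC : ∀ j ≤ m, M.IsCircuit (seg e (a + 2 * j) t)) (hK : M.IsCocircuit (seg e b t))
    (hE : M.E ⊆ seg e b t ∪ seg e a (t + 2 * m)) : rkf M M.E ≤ t + m := by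
  rw [← Nat.cast_le (α := ℕ∞), cast_rkf, M.eRk_ground, Nat.cast_add]
  calc M.eRank ≤ M.eRk (M.E \ seg e b t) + 1 := eRank_le_eRk_compl_add_one_of_isCocircuit hK
    _ ≤ M.eRk (seg e a (t + 2 * m)) + 1 := by
        gcongr
        exact M.eRk_mono (sdiff_subset_iff.2 hE)
    _ ≤ t + m := eRk_seg_add_one_le ht hC

lemma not_isCocircuit_seg_of_isCircuit_seg (he : Function.Injective e) (ht : 1 ≤ t)
    (htn : 2 * t ≤ n + 1) {i j : ℤ} (hij : (j : ZMod n) = (i + t - 1 : ℤ))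
    (hC : M.IsCircuit (seg e i t)) : ¬ M.IsCocircuit (seg e j t) := by
  rw [seg_congr hij]
  exact fun hK => hC.inter_isCocircuit_ne_singleton hK (seg_inter_seg_eq_singleton he ht htn i)

end Arcs

namespace CyclicOrd

variable {n : ℕ} {M : Matroid α} {e : ZMod n → α}

lemma ncard_ground (he : CyclicOrd M e) : M.E.ncard = n := by
  rw [← he.2, ncard_range_of_injective he.1, Nat.card_zmod]

lemma matroid_finite [NeZero n] (he : CyclicOrd M e) : M.Finite :=
  ⟨he.2 ▸ finite_range e⟩

lemma ground_eq_seg_union_seg [NeZero n] (he : CyclicOrd M e) (i : ℤ) {k l : ℕ}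
    (hkl : k + l = n) : M.E = seg e i k ∪ seg e (i + k) l := by
  rw [← he.2, ← seg_add, hkl, seg_self_eq_range]

end CyclicOrd

/-- The common form of odd (`d = 1`) and even (`d = 0`) `t`-cyclic orderings: for all odd
`i ∈ {1, …, n}`, the `t` elements from position `i` on form a circuit, and the `t` elements from
position `i + d` on form a cocircuit. -/
structure ShiftedTCycOrd {n : ℕ} (M : Matroid α) (t d : ℕ) (e : ZMod n → α) : Prop where
  cyclicOrd : CyclicOrd M e
  lt_card : t < n
  shift_le_one : d ≤ 1
  isCircuit : ∀ i : ℕ, Odd i → i ≤ n → M.IsCircuit (seg e i t)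
  isCocircuit : ∀ i : ℕ, Odd i → i ≤ n → M.IsCocircuit (seg e (i + d) t)

lemma OddTCycOrd.shiftedTCycOrd {n t : ℕ} {M : Matroid α} {e : ZMod n → α}
    (h : OddTCycOrd M t e) : ShiftedTCycOrd M t 1 e where
  cyclicOrd := h.1
  lt_card := h.2.1
  shift_le_one := le_rfl
  isCircuit i hi hin := (h.2.2 i hi hi.pos hin).1.1
  isCocircuit i hi hin := (h.2.2 i hi hi.pos hin).2.1

lemma EvenTCycOrd.shiftedTCycOrd {n t : ℕ} {M : Matroid α} {e : ZMod n → α}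
    (h : EvenTCycOrd M t e) : ShiftedTCycOrd M t 0 e where
  cyclicOrd := h.1
  lt_card := h.2.1
  shift_le_one := zero_le_one
  isCircuit i hi hin := (h.2.2 i hi hi.pos hin).1
  isCocircuit i hi hin := by
    rw [Nat.cast_zero, add_zero]
    exact (h.2.2 i hi hi.pos hin).2.1

lemma TCyclic.exists_shiftedTCycOrd {M : Matroid α} {t : ℕ} (h : TCyclic M t) :
    ∃ (n d : ℕ) (e : ZMod n → α), ShiftedTCycOrd M t d e := by
  obtain ⟨n, e, hodd | heven⟩ := h
  · exact ⟨n, 1, e, hodd.shiftedTCycOrd⟩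
  · exact ⟨n, 0, e, heven.shiftedTCycOrd⟩

namespace ShiftedTCycOrd

variable {n : ℕ} {M : Matroid α} {t d : ℕ} {e : ZMod n → α}

lemma le_rkf_ground_add_one [M.RankFinite] (h : ShiftedTCycOrd M t d e) :
    t ≤ rkf M M.E + 1 := by
  have hC : M.IsCircuit (seg e (1 : ℕ) t) := h.isCircuit 1 odd_one h.lt_card.pos
  simpa only [ncard_seg h.cyclicOrd.1 _ h.lt_card.le] using
    ncard_le_rkf_ground_add_one_of_isCircuit hC

lemma le_rkf_dual_ground_add_one [M✶.RankFinite] (h : ShiftedTCycOrd M t d e) :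
    t ≤ rkf M✶ M✶.E + 1 := by
  have hK : M.IsCocircuit (seg e ((1 : ℕ) + d) t) := h.isCocircuit 1 odd_one h.lt_card.pos
  simpa only [ncard_seg h.cyclicOrd.1 _ h.lt_card.le] using
    ncard_le_rkf_ground_add_one_of_isCircuit hK.isCircuit

lemma even_add_shift (h : ShiftedTCycOrd M t d e) (ht : 1 ≤ t) (htn : 2 * t ≤ n + 1) :
    Even (t + d) := by
  have hdt : d ≤ t := h.shift_le_one.trans ht
  have hlt : t < n := h.lt_card
  by_contra hodd
  have hi : Odd (t - d) := by grind
  refine not_isCocircuit_seg_of_isCircuit_seg h.cyclicOrd.1 ht htn ?_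
    (h.isCircuit 1 odd_one hlt.pos) (h.isCocircuit (t - d) hi (by omega))
  push_cast [hdt]
  ring

lemma even_card (h : ShiftedTCycOrd M t d e) (ht : 1 ≤ t) (htn : 2 * t ≤ n + 1) : Even n := by
  have htd : Even (t + d) := h.even_add_shift ht htn
  have hi : Odd (t + d - 1) := by grind
  have hle : t + d - 1 ≤ n := by
    have hd : d ≤ 1 := h.shift_le_one
    have hlt : t < n := h.lt_card
    omega
  by_contra hn
  -- The cocircuit from position `n + d` wraps around and ends where the circuit below starts.
  have hK : M✶.IsCircuit (seg e (n + d) t) := h.isCocircuit n (Nat.not_even_iff_odd.1 hn) le_rfl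
  have hC : M✶.IsCocircuit (seg e (t + d - 1 : ℕ) t) :=
    (h.isCircuit _ hi hle).isCocircuit
  refine not_isCocircuit_seg_of_isCircuit_seg h.cyclicOrd.1 ht htn ?_ hK hC
  rw [Nat.cast_sub (by omega)]
  push_cast [ZMod.natCast_self]
  ring

lemma rkf_ground_le [M.RankFinite] (h : ShiftedTCycOrd M t d e) (ht : 1 ≤ t) {m : ℕ}
    (hn : n = 2 * (t + m)) : rkf M M.E ≤ t + m := by
  have htd : Even (t + d) := h.even_add_shift ht (by omega)
  have hd : d ≤ 1 := h.shift_le_one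
  have : NeZero n := ⟨h.lt_card.ne_bot⟩
  have hC : ∀ j ≤ m, M.IsCircuit (seg e (1 + 2 * j) t) := fun j hj => by
    exact_mod_cast h.isCircuit (1 + 2 * j) (by grind) (by omega)
  have hK : M.IsCocircuit (seg e (1 + (t + 2 * m : ℕ)) t) := by
    convert h.isCocircuit (1 + t + 2 * m - d) (by grind) (by omega) using 2
    omega
  refine rkf_ground_le_of_isCocircuit_seg ht hC hK ?_
  rw [union_comm]
  exact (h.cyclicOrd.ground_eq_seg_union_seg 1 (by omega)).subset

lemma rkf_dual_ground_le [M✶.RankFinite] (h : ShiftedTCycOrd M t d e) (ht : 1 ≤ t) {m : ℕ}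
    (hn : n = 2 * (t + m)) : rkf M✶ M✶.E ≤ t + m := by
  have htd : Even (t + d) := h.even_add_shift ht (by omega)
  have hd : d ≤ 1 := h.shift_le_one
  have : NeZero n := ⟨h.lt_card.ne_bot⟩
  have hK : ∀ j ≤ m, M✶.IsCircuit (seg e (1 + t + 2 * j) t) := fun j hj => by
    convert h.isCocircuit (1 + t - d + 2 * j) (by grind) (by omega) using 2
    omega
  have hC : M✶.IsCocircuit (seg e 1 t) := by
    exact_mod_cast (h.isCircuit 1 odd_one h.lt_card.pos).isCocircuit
  exact rkf_ground_le_of_isCocircuit_seg ht hK hC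
    (h.cyclicOrd.ground_eq_seg_union_seg 1 (by omega)).subset

end ShiftedTCycOrd

/-- If `t ≥ 1` and `M` is a `t`-cyclic matroid, then
`r(M) = r*(M) = |E(M)| / 2`. -/
theorem statement_9 (M : Matroid α) (t : ℕ) (ht : 1 ≤ t) (h : TCyclic M t) :
    rkf M M.E = rkf M✶ M✶.E ∧ 2 * rkf M M.E = M.E.ncard := by
  obtain ⟨n, d, e, he⟩ := h.exists_shiftedTCycOrd
  have : NeZero n := ⟨he.lt_card.ne_bot⟩
  have : M.Finite := he.cyclicOrd.matroid_finite
  have hsum : rkf M M.E + rkf M✶ M✶.E = M.E.ncard := rkf_ground_add_rkf_dual_ground M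
  have hcard : M.E.ncard = n := he.cyclicOrd.ncard_ground
  rcases le_or_gt (n + 2) (2 * t) with hlarge | hsmall
  · have hr : t ≤ rkf M M.E + 1 := he.le_rkf_ground_add_one
    have hr' : t ≤ rkf M✶ M✶.E + 1 := he.le_rkf_dual_ground_add_one
    omega
  · obtain ⟨c, hc⟩ := he.even_card ht (by omega)
    obtain ⟨m, rfl⟩ : ∃ m, c = t + m := Nat.exists_eq_add_of_le (by omega)
    have hr : rkf M M.E ≤ t + m := he.rkf_ground_le ht (by omega)
    have hr' : rkf M✶ M✶.E ≤ t + m := he.rkf_dual_ground_le ht (by omega)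
    omega

end CyclicArr
end

section
/- Let M be a matroid that has the cyclic (1,2)-property, i.e., there is a cyclic ordering e_1, …, e_n of E(M) such that every element e_i is contained in a 2-element circuit and in a 2-element cocircuit of M. Then E(M) can be partitioned into 2-element sets each of which is both a circuit and a cocircuit of M (equivalently, M is a direct sum of copies of U_{1,2}). -/
open Set

namespace CyclicArr

variable {α : Type*}

theorem eq_of_nontrivial_of_subset_of_ncard_eq_two {s t : Set α} (hs : s.Nontrivial)
    (hst : s ⊆ t) (ht : t.ncard = 2) : s = t := by
  have ht_finite : t.Finite := finite_of_ncard_ne_zero (by lia)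
  have hs_card : 1 < s.ncard :=
    one_lt_ncard_iff_nontrivial_and_finite.2 ⟨hs, ht_finite.subset hst⟩
  exact eq_of_subset_of_ncard_le hst (by lia) ht_finite

-- Orthogonality: a circuit and a cocircuit never meet in exactly one element.
theorem Cct.eq_of_inter_nonempty_of_ncard_eq_two {M : Matroid α} {C K : Set α} (hC : Cct M C)
    (hK : Cct M✶ K) (hC₂ : C.ncard = 2) (hK₂ : K.ncard = 2) (hCK : (C ∩ K).Nonempty) :
    C = K := by
  have hnontrivial : (C ∩ K).Nontrivial :=
    Matroid.IsCircuit.isCocircuit_inter_nontrivial hC hK hCK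
  calc
    C = C ∩ K :=
      (eq_of_nontrivial_of_subset_of_ncard_eq_two hnontrivial inter_subset_left hC₂).symm
    _ = K := eq_of_nontrivial_of_subset_of_ncard_eq_two hnontrivial inter_subset_right hK₂

/-- The two-element sets that are both a circuit and a cocircuit of `M`, i.e. the ground sets of
the direct summands of `M` isomorphic to `U_{1,2}`. -/
def circuitCocircuitPairs (M : Matroid α) : Set (Set α) :=
  {L | L.ncard = 2 ∧ Cct M L ∧ Cct M✶ L}

theorem pairwiseDisjoint_circuitCocircuitPairs (M : Matroid α) :
    (circuitCocircuitPairs M).PairwiseDisjoint id := by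
  rintro L ⟨hL₂, hL, -⟩ L' ⟨hL'₂, -, hL'⟩ hne
  by_contra hmeet
  exact hne <| hL.eq_of_inter_nonempty_of_ncard_eq_two hL' hL₂ hL'₂ <|
    not_disjoint_iff_nonempty_inter.1 hmeet

theorem mem_sUnion_circuitCocircuitPairs {M : Matroid α} {x : α}
    (hcircuit : ∃ C, Cct M C ∧ C.ncard = 2 ∧ x ∈ C)
    (hcocircuit : ∃ K, Cct M✶ K ∧ K.ncard = 2 ∧ x ∈ K) :
    x ∈ ⋃₀ circuitCocircuitPairs M := by
  obtain ⟨C, hC, hC₂, hxC⟩ := hcircuit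
  obtain ⟨K, hK, hK₂, hxK⟩ := hcocircuit
  obtain rfl : C = K := hC.eq_of_inter_nonempty_of_ncard_eq_two hK hC₂ hK₂ ⟨x, hxC, hxK⟩
  exact ⟨C, ⟨hC₂, hC, hK⟩, hxC⟩

theorem sUnion_circuitCocircuitPairs_subset_ground (M : Matroid α) :
    ⋃₀ circuitCocircuitPairs M ⊆ M.E :=
  sUnion_subset fun _ hL ↦ hL.2.1.prop.subset_ground

theorem statement_19_general (M : Matroid α)
    (hprop : ∀ x ∈ M.E,
      (∃ C, Cct M C ∧ C.ncard = 2 ∧ x ∈ C) ∧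
      (∃ C, Cct M✶ C ∧ C.ncard = 2 ∧ x ∈ C)) :
    ∃ Fam : Set (Set α),
      (∀ L ∈ Fam, L.ncard = 2 ∧ Cct M L ∧ Cct M✶ L) ∧
      Fam.PairwiseDisjoint id ∧ ⋃₀ Fam = M.E :=
  ⟨circuitCocircuitPairs M, fun _ hL ↦ hL, pairwiseDisjoint_circuitCocircuitPairs M,
    (sUnion_circuitCocircuitPairs_subset_ground M).antisymm fun x hx ↦
      mem_sUnion_circuitCocircuitPairs (hprop x hx).1 (hprop x hx).2⟩

/-- If a finite matroid `M` has the cyclic `(1, 2)`-property (every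
element of a cyclic ordering lies in a `2`-element circuit and a `2`-element cocircuit),
then `E(M)` can be partitioned into `2`-element sets each of which is both a circuit and
a cocircuit of `M`. -/
theorem statement_19 (M : Matroid α) (hfin : M.E.Finite) (n : ℕ) (e : ZMod n → α)
    (he : CyclicOrd M e)
    (hprop : ∀ i : ZMod n,
      (∃ C, Cct M C ∧ C.ncard = 2 ∧ e i ∈ C) ∧
      (∃ C, Cct M✶ C ∧ C.ncard = 2 ∧ e i ∈ C)) :
    ∃ Fam : Set (Set α),
      (∀ L ∈ Fam, L.ncard = 2 ∧ Cct M L ∧ Cct M✶ L) ∧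
      Fam.PairwiseDisjoint id ∧ ⋃₀ Fam = M.E := by
  exact statement_19_general M (he.2 ▸ forall_mem_range.2 hprop)

end CyclicArr
end
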